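/- Let d be a positive integer and J ⊊ I nonzero square-free monomial ideals of S such that I is generated by square-free monomials f_1,…,f_r (r > 0) of degree d and J is generated by square-free monomials of degree d+1, and let s = ρ_{d+1}(I) − ρ_{d+1}(J) be the number of square-free monomials of degree d+1 lying in I \ J. If r > s, then sdepth_S (I/J) = d. -/

import Mathlib

open MvPolynomial

/-- The square-free monomial `∏ i ∈ T, X i` associated to a set `T` of variables. -/
noncomputable def sqMon (K : Type) [Field K] {n : ℕ} (T : Finset (Fin n)) :
    MvPolynomial (Fin n) K :=
  ∏ i ∈ T, X i

/-- `GenBySqMonOfDeg K P I` means: `I` is generated by square-free monomials whose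
degrees satisfy the predicate `P`. -/
def GenBySqMonOfDeg (K : Type) [Field K] {n : ℕ} (P : ℕ → Prop)
    (I : Ideal (MvPolynomial (Fin n) K)) : Prop :=
  ∃ G : Set (Finset (Fin n)), (∀ T ∈ G, P T.card) ∧ I = Ideal.span (sqMon K '' G)

/-- `rho K d I` : the number of square-free monomials of degree `d` belonging to `I`. -/
noncomputable def rho (K : Type) [Field K] {n : ℕ} (d : ℕ)
    (I : Ideal (MvPolynomial (Fin n) K)) : ℕ :=
  Set.ncard {T : Finset (Fin n) | T.card = d ∧ sqMon K T ∈ I}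

/-- The maximal graded ideal `(x_1, …, x_n)` of `K[x_1, …, x_n]`. -/
noncomputable def maxGraded (K : Type) [Field K] (n : ℕ) :
    Ideal (MvPolynomial (Fin n) K) :=
  Ideal.span (Set.range (X : Fin n → MvPolynomial (Fin n) K))

/-- The depth of the module `M` with respect to the ideal `I` : the supremum of the
lengths of `M`-regular sequences consisting of elements of `I`. -/
noncomputable def moduleDepth {R : Type} [CommRing R] (I : Ideal R)
    (M : Type) [AddCommGroup M] [Module R M] : ℕ∞ :=
  sSup {k : ℕ∞ | ∃ rs : List R, k = (rs.length : ℕ∞) ∧ (∀ r ∈ rs, r ∈ I) ∧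
    RingTheory.Sequence.IsRegular M rs}

/-- The `R`-module `I/J` (more precisely `I/(I ∩ J)`, which is `I/J` when `J ≤ I`). -/
noncomputable abbrev idealQuot {R : Type} [CommRing R] (I J : Ideal R) : Type :=
  ↥I ⧸ (Submodule.comap I.subtype (J : Submodule R R))

/-- The poset (here: set, ordered by `⊆`, i.e. divisibility of square-free monomials)
of square-free monomials lying in `I \ J`. -/
def monoPoset (K : Type) [Field K] {n : ℕ} (I J : Ideal (MvPolynomial (Fin n) K)) :
    Set (Finset (Fin n)) :=
  {T | sqMon K T ∈ I ∧ sqMon K T ∉ J}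

/-- `C` is a partition of `P` into intervals `[p.1, p.2] = {T | p.1 ⊆ T ⊆ p.2}`:
the intervals have endpoints in `P` and every element of `P` lies in exactly one
of them. -/
def IntervalPartition {n : ℕ} (P : Set (Finset (Fin n)))
    (C : Finset (Finset (Fin n) × Finset (Fin n))) : Prop :=
  (∀ p ∈ C, p.1 ∈ P ∧ p.2 ∈ P ∧ p.1 ⊆ p.2) ∧
  ∀ T ∈ P, ∃! p, p ∈ C ∧ p.1 ⊆ T ∧ T ⊆ p.2

/-- The Stanley depth of `I/J`: the maximum over interval partitions of the poset of
square-free monomials of `I \ J` of the minimal degree of an upper endpoint. -/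
noncomputable def sdepthQuot (K : Type) [Field K] {n : ℕ}
    (I J : Ideal (MvPolynomial (Fin n) K)) : ℕ :=
  sSup {d : ℕ | ∃ C, IntervalPartition (monoPoset K I J) C ∧ ∀ p ∈ C, d ≤ p.2.card}

theorem sqMon_eq_monomial (K : Type) [Field K] {n : ℕ} (T : Finset (Fin n)) :
    sqMon K T = monomial (∑ i ∈ T, Finsupp.single i 1) (1 : K) := by
  unfold sqMon
  rw [MvPolynomial.monomial_sum_one]
  rfl

theorem expo_apply {n : ℕ} (T : Finset (Fin n)) (j : Fin n) :
    (∑ i ∈ T, Finsupp.single i (1 : ℕ)) j = if j ∈ T then 1 else 0 := by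
  classical
  rw [Finsupp.finset_sum_apply]
  simp [Finsupp.single_apply]

theorem expo_le {n : ℕ} (U T : Finset (Fin n)) :
    (∑ i ∈ U, Finsupp.single i (1 : ℕ)) ≤ (∑ i ∈ T, Finsupp.single i (1 : ℕ)) ↔ U ⊆ T := by
  rw [Finsupp.le_def]
  simp only [expo_apply]
  constructor
  · intro h j hj
    have := h j
    by_contra hT
    simp [hj, hT] at this
  · intro h j
    by_cases hj : j ∈ U
    · simp [hj, h hj]
    · simp [hj]

theorem sqMon_mem_span (K : Type) [Field K] {n : ℕ} (G : Set (Finset (Fin n)))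
    (T : Finset (Fin n)) :
    sqMon K T ∈ Ideal.span (sqMon K '' G) ↔ ∃ U ∈ G, U ⊆ T := by
  classical
  have h1 : sqMon K '' G = (fun s => monomial s (1 : K)) ''
      ((fun U : Finset (Fin n) => ∑ i ∈ U, Finsupp.single i (1 : ℕ)) '' G) := by
    rw [Set.image_image]
    exact Set.image_congr fun U _ => sqMon_eq_monomial K U
  rw [h1, MvPolynomial.mem_ideal_span_monomial_image, sqMon_eq_monomial,
    MvPolynomial.support_monomial]
  simp [expo_le]

/-- Remark 2.6: if `r > s` then the Stanley depth of `I/J` is `d`. -/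
theorem stmt_19 (n : ℕ) (K : Type) [Field K] (d : ℕ) (hd : 0 < d)
    (I J : Ideal (MvPolynomial (Fin n) K)) (hJ0 : J ≠ ⊥) (hJI : J < I)
    (r : ℕ) (hr : 0 < r) (f : Fin r → Finset (Fin n)) (hfinj : Function.Injective f)
    (hfd : ∀ i, (f i).card = d)
    (hIgen : I = Ideal.span (Set.range fun i => sqMon K (f i)))
    (hJgen : GenBySqMonOfDeg K (fun k => k = d + 1) J)
    (hrs : rho K (d + 1) I - rho K (d + 1) J < r) :
    sdepthQuot K I J = d := by
  classical
  obtain ⟨G, hG, hJG⟩ := hJgen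
  have memI : ∀ T, sqMon K T ∈ I ↔ ∃ i, f i ⊆ T := by
    intro T
    have : (Set.range fun i => sqMon K (f i)) = sqMon K '' Set.range f := by
      rw [← Set.range_comp]; rfl
    rw [hIgen, this, sqMon_mem_span]
    simp
  have memJ : ∀ T, sqMon K T ∈ J ↔ ∃ U ∈ G, U ⊆ T := by
    intro T
    rw [hJG, sqMon_mem_span]
  have cardI : ∀ T, sqMon K T ∈ I → d ≤ T.card := by
    intro T hT
    obtain ⟨i, hi⟩ := (memI T).1 hT
    rw [← hfd i]
    exact Finset.card_le_card hi
  apply IsGreatest.csSup_eq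
  constructor
  · refine ⟨Finset.univ.filter (fun p => p.1 ∈ monoPoset K I J ∧ p.1 = p.2), ⟨?_, ?_⟩, ?_⟩
    · rintro ⟨a, b⟩ hp
      simp only [Finset.mem_filter, Finset.mem_univ, true_and] at hp
      obtain ⟨h1, rfl⟩ := hp
      exact ⟨h1, h1, subset_rfl⟩
    · intro T hT
      refine ⟨(T, T), by simp [hT], ?_⟩
      rintro ⟨a, b⟩ ⟨hp, h1, h2⟩
      simp only [Finset.mem_filter, Finset.mem_univ, true_and] at hp
      obtain ⟨-, rfl⟩ := hp
      have := Finset.Subset.antisymm h1 h2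
      simp only at this
      rw [this]
    · rintro ⟨a, b⟩ hp
      simp only [Finset.mem_filter, Finset.mem_univ, true_and] at hp
      obtain ⟨h1, rfl⟩ := hp
      exact cardI _ h1.1
  · rintro k ⟨C, ⟨hC1, hC2⟩, hk⟩
    by_contra hlt
    push Not at hlt
    have hfP : ∀ i, f i ∈ monoPoset K I J := by
      intro i
      refine ⟨(memI _).2 ⟨i, subset_rfl⟩, fun h => ?_⟩
      obtain ⟨U, hU, hs⟩ := (memJ _).1 h
      have h1 := Finset.card_le_card hs
      have h2 := hG U hU
      have h3 := hfd i
      omega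
    have key : ∀ i, ∃ p g, p ∈ C ∧ p.1 = f i ∧ f i ⊆ g ∧ g ⊆ p.2 ∧ g.card = d + 1 := by
      intro i
      obtain ⟨p, ⟨hp, h1, h2⟩, -⟩ := hC2 _ (hfP i)
      have hc := cardI _ (hC1 p hp).1.1
      have he : p.1 = f i := Finset.eq_of_subset_of_card_le h1 (by rw [hfd i]; exact hc)
      have hkp := hk p hp
      obtain ⟨g, hg1, hg2, hg3⟩ := Finset.exists_subsuperset_card_eq h2
        (n := d + 1) (by rw [hfd i]; omega) (by omega)
      exact ⟨p, g, hp, he, hg1, hg2, hg3⟩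
    choose p g hpC hpf hfg hgp hgc using key
    have hgI : ∀ i, sqMon K (g i) ∈ I := fun i => (memI _).2 ⟨i, hfg i⟩
    have hgJ : ∀ i, sqMon K (g i) ∉ J := by
      intro i h
      obtain ⟨U, hU, hs⟩ := (memJ _).1 h
      exact (hC1 _ (hpC i)).2.1.2 ((memJ _).2 ⟨U, hU, hs.trans (hgp i)⟩)
    have hginj : Function.Injective g := by
      intro i j hij
      apply hfinj
      rw [← hpf i, ← hpf j]
      rw [(hC2 (g i) ⟨hgI i, hgJ i⟩).unique (y₁ := p i) (y₂ := p j)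
        ⟨hpC i, by rw [hpf i]; exact hfg i, hgp i⟩
        ⟨hpC j, by rw [hpf j, hij]; exact hfg j, by rw [hij]; exact hgp j⟩]
    have hsub : {T : Finset (Fin n) | T.card = d + 1 ∧ sqMon K T ∈ J} ⊆
        {T : Finset (Fin n) | T.card = d + 1 ∧ sqMon K T ∈ I} :=
      fun T hT => ⟨hT.1, hJI.le hT.2⟩
    have hdiff := Set.ncard_diff hsub (Set.toFinite _)
    have hr2 : (Set.range g).ncard = r := by
      rw [← Set.image_univ, Set.ncard_image_of_injective _ hginj, Set.ncard_univ]
      simp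
    have hle : (Set.range g).ncard ≤ ({T : Finset (Fin n) | T.card = d + 1 ∧ sqMon K T ∈ I} \
        {T : Finset (Fin n) | T.card = d + 1 ∧ sqMon K T ∈ J}).ncard := by
      apply Set.ncard_le_ncard _ (Set.toFinite _)
      rintro _ ⟨i, rfl⟩
      exact ⟨⟨hgc i, hgI i⟩, fun h => hgJ i h.2⟩
    unfold rho at hrs
    omega
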